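/- Let n ≥ 1 be an integer, let τ > 0, and let f be a nonnegative, not identically zero, sin^n-concave function on [0, τ] that attains its maximum at 0. Then for every real k ≥ 0 and every ε with 0 < ε ≤ π/2: (∫₀^{min(ε,τ)} f(t)·sin(t)^k dt) / (∫₀^{τ} f(t)·sin(t)^k dt) ≥ (∫₀^{ε} cos(t)^n·sin(t)^k dt) / (∫₀^{π/2} cos(t)^n·sin(t)^k dt). -/

import Mathlib

open Real Set

/-- A function `f` is `sin^N`-concave on a set `I ⊆ ℝ` if for all `x1, x2 ∈ I`,
`f((x1+x2)/2)^{1/N} ≥ (f(x1)^{1/N} + f(x2)^{1/N}) / (2 cos(|x2 − x1|/2))`. -/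
def SinConcaveOn (N : ℝ) (f : ℝ → ℝ) (I : Set ℝ) : Prop :=
  ∀ x1 ∈ I, ∀ x2 ∈ I,
    (f x1 ^ (1 / N) + f x2 ^ (1 / N)) / (2 * Real.cos (|x2 - x1| / 2))
      ≤ f ((x1 + x2) / 2) ^ (1 / N)

/-- midpoint inequality with the largest value normalised at `0` gives `u ≤ cos`. -/
lemma aux_le_cos (τ : ℝ) (u : ℝ → ℝ) (h0 : u 0 = 1)
    (hmax : ∀ x ∈ Icc (0 : ℝ) τ, u x ≤ 1)
    (hmid : ∀ x ∈ Icc (0 : ℝ) τ, ∀ d, 0 ≤ d → d < π / 2 → x + 2 * d ≤ τ →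
      u x + u (x + 2 * d) ≤ 2 * cos d * u (x + d)) :
    ∀ t ∈ Icc (0 : ℝ) τ, t < π → u t ≤ cos t := by
  have key : ∀ m : ℕ, ∀ t ∈ Icc (0 : ℝ) τ, t < π → u t - cos t ≤ t ^ 2 * (1 / 2) ^ m := by
    intro m
    induction m with
    | zero =>
      intro t ht _
      have := hmax t ht
      have := one_sub_sq_div_two_le_cos (x := t)
      nlinarith [sq_nonneg t]
    | succ m ih =>
      intro t ht htp
      have ht0 := ht.1
      have h1 := hmid 0 ⟨le_rfl, ht0.trans ht.2⟩ (t / 2) (by linarith) (by linarith)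
        (by linarith [ht.2])
      have h2 := ih (t / 2) ⟨by linarith, by linarith [ht.2]⟩ (by linarith)
      have e1 : (0 : ℝ) + 2 * (t / 2) = t := by ring
      have e2 : (0 : ℝ) + t / 2 = t / 2 := by ring
      rw [e1, e2, h0] at h1
      have hc : 0 ≤ cos (t / 2) := cos_nonneg_of_mem_Icc ⟨by linarith, by linarith⟩
      have hc1 := cos_le_one (t / 2)
      have h3 : cos t = 2 * cos (t / 2) ^ 2 - 1 := by
        rw [← cos_two_mul]; ring_nf
      have hp : 0 ≤ t ^ 2 * (1 / 2 : ℝ) ^ m := by positivity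
      have h4 := mul_le_mul_of_nonneg_left h2 hc
      have h5 := mul_le_mul_of_nonneg_right hc1 hp
      rw [pow_succ (1 / 2 : ℝ) m]
      nlinarith
  intro t ht htp
  have lim : Filter.Tendsto (fun m : ℕ => t ^ 2 * (1 / 2 : ℝ) ^ m) Filter.atTop
      (nhds (t ^ 2 * 0)) :=
    (tendsto_pow_atTop_nhds_zero_of_lt_one (by norm_num) (by norm_num)).const_mul _
  have := ge_of_tendsto' lim (fun m => key m t ht htp)
  linarith

lemma aux_ratio (τ : ℝ) (u : ℝ → ℝ) (h0 : u 0 = 1)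
    (hnn : ∀ x ∈ Icc (0 : ℝ) τ, 0 ≤ u x)
    (hcos : ∀ x ∈ Icc (0 : ℝ) τ, u x ≤ cos x)
    (hmid : ∀ x ∈ Icc (0 : ℝ) τ, ∀ d, 0 ≤ d → d < π / 2 → x + 2 * d ≤ τ →
      u x + u (x + 2 * d) ≤ 2 * cos d * u (x + d)) :
    ∀ x y, 0 ≤ x → x ≤ y → y ≤ τ → y < π / 2 → u y * cos x ≤ u x * cos y := by
  intro x y hx0 hxy hyτ hyp
  have hy0 : 0 ≤ y := hx0.trans hxy
  have hcy : 0 < cos y := cos_pos_of_mem_Ioo ⟨by linarith [pi_pos], hyp⟩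
  obtain ⟨V, hV⟩ : ∃ V, V = u y / cos y := ⟨_, rfl⟩
  have hVy : V * cos y = u y := by rw [hV]; field_simp
  have hV0 : 0 ≤ V := by rw [hV]; exact div_nonneg (hnn y ⟨hy0, hyτ⟩) hcy.le
  have hV1 : V ≤ 1 := by rw [hV, div_le_one hcy]; exact hcos y ⟨hy0, hyτ⟩
  have hcd : ∀ d, 0 ≤ d → d ≤ π / 4 → 4 / 3 ≤ 2 * cos d := by
    intro d hd hd'
    have h1 : cos (π / 4) ≤ cos d := cos_le_cos_of_nonneg_of_le_pi hd (by linarith [pi_pos]) hd'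
    rw [cos_pi_div_four] at h1
    have : (4 / 3 : ℝ) ≤ √2 := le_sqrt_of_sq_le (by norm_num)
    linarith
  have key : ∀ m : ℕ, ∀ z ∈ Icc (0 : ℝ) y, -(3 / 4 : ℝ) ^ m ≤ u z - V * cos z := by
    intro m
    induction m with
    | zero =>
      intro z hz
      have := hnn z ⟨hz.1, hz.2.trans hyτ⟩
      have := cos_le_one z
      nlinarith
    | succ m ih =>
      intro z hz
      have gen : ∀ a d, 0 ≤ a → 0 ≤ d → d ≤ π / 4 → a + 2 * d ≤ y → a + d = z →
          -(3 / 4 : ℝ) ^ m ≤ (u a - V * cos a) + (u (a + 2 * d) - V * cos (a + 2 * d)) →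
          -(3 / 4 : ℝ) ^ (m + 1) ≤ u z - V * cos z := by
        intro a d ha hd hd4 had hz' hs
        have h1 := hmid a ⟨ha, by linarith⟩ d hd (by linarith [pi_pos]) (by linarith)
        have h2 : cos a + cos (a + 2 * d) = 2 * cos d * cos z := by
          rw [← hz', cos_add_cos]
          rw [show (a + (a + 2 * d)) / 2 = a + d by ring,
            show (a - (a + 2 * d)) / 2 = -d by ring, cos_neg]
          ring
        rw [hz'] at h1
        have h3 := hcd d hd hd4
        have h4 : -(3 / 4 : ℝ) ^ m ≤ 2 * cos d * (u z - V * cos z) := by nlinarith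
        have hp : 0 < (3 / 4 : ℝ) ^ m := by positivity
        rw [pow_succ]
        by_contra hcon
        push Not at hcon
        nlinarith
      rcases le_total z (y / 2) with h | h
      · apply gen 0 z le_rfl hz.1 (by linarith) (by linarith) (by ring)
        have := ih (2 * z) ⟨by linarith [hz.1], by linarith⟩
        rw [h0, cos_zero, zero_add]; linarith
      · apply gen (2 * z - y) (y - z) (by linarith) (by linarith [hz.2]) (by linarith)
          (by linarith) (by ring)
        have := ih (2 * z - y) ⟨by linarith [hz.1], by linarith [hz.2]⟩
        rw [show 2 * z - y + 2 * (y - z) = y by ring, hVy]; linarith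
  have lim : Filter.Tendsto (fun m : ℕ => -(3 / 4 : ℝ) ^ m) Filter.atTop (nhds (-0)) :=
    (tendsto_pow_atTop_nhds_zero_of_lt_one (by norm_num) (by norm_num)).neg
  have h := le_of_tendsto' lim (fun m => key m x ⟨hx0, hxy⟩)
  have h6 : V * cos x ≤ u x := by linarith
  calc u y * cos x = V * cos x * cos y := by rw [← hVy]; ring
    _ ≤ _ := mul_le_mul_of_nonneg_right h6 hcy.le

lemma aux_main (n : ℕ) (hn : 1 ≤ n) (τ : ℝ) (hτ : 0 < τ) (hτπ : τ ≤ π)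
    (f : ℝ → ℝ) (hf0 : ∀ x ∈ Icc (0 : ℝ) τ, 0 ≤ f x)
    (hfne : ∃ x ∈ Icc (0 : ℝ) τ, f x ≠ 0)
    (hconc : SinConcaveOn n f (Icc 0 τ))
    (hmax : ∀ x ∈ Icc (0 : ℝ) τ, f x ≤ f 0) :
    τ ≤ π / 2 ∧ 0 < f (τ / 2) ∧
    ∀ x y, 0 ≤ x → x ≤ y → y ≤ τ → f y * cos x ^ n ≤ f x * cos y ^ n := by
  have hf00 : 0 < f 0 := by
    obtain ⟨x, hx, hne⟩ := hfne
    exact (lt_of_le_of_ne (hf0 x hx) hne.symm).trans_le (hmax x hx)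
  have hn0 : (n : ℕ) ≠ 0 := by omega
  have hninv : (0 : ℝ) ≤ 1 / (n : ℝ) := by positivity
  obtain ⟨G, hG⟩ : ∃ G, G = f 0 ^ (1 / (n : ℝ)) := ⟨_, rfl⟩
  have hGpos : 0 < G := by rw [hG]; exact rpow_pos_of_pos hf00 _
  obtain ⟨u, hu⟩ : ∃ u : ℝ → ℝ, ∀ x, u x = f x ^ (1 / (n : ℝ)) / G := ⟨_, fun _ => rfl⟩
  have huG : ∀ x, f x ^ (1 / (n : ℝ)) = G * u x := by intro x; rw [hu]; field_simp
  have hfu : ∀ x ∈ Icc (0 : ℝ) τ, f x = G ^ n * u x ^ n := by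
    intro x hx
    rw [← mul_pow, ← huG, one_div, rpow_inv_natCast_pow (hf0 x hx) hn0]
  have h0 : u 0 = 1 := by rw [hu, ← hG]; field_simp
  have hnn : ∀ x ∈ Icc (0 : ℝ) τ, 0 ≤ u x := by
    intro x hx; rw [hu]; exact div_nonneg (rpow_nonneg (hf0 x hx) _) hGpos.le
  have hle1 : ∀ x ∈ Icc (0 : ℝ) τ, u x ≤ 1 := by
    intro x hx; rw [hu, div_le_one hGpos, hG]
    exact rpow_le_rpow (hf0 x hx) (hmax x hx) hninv
  have hmid : ∀ x ∈ Icc (0 : ℝ) τ, ∀ d, 0 ≤ d → d < π / 2 → x + 2 * d ≤ τ →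
      u x + u (x + 2 * d) ≤ 2 * cos d * u (x + d) := by
    intro x hx d hd hdp hxd
    have h := hconc x hx (x + 2 * d) ⟨by linarith [hx.1], hxd⟩
    rw [show x + 2 * d - x = 2 * d by ring, abs_of_nonneg (by linarith),
      show 2 * d / 2 = d by ring, show (x + (x + 2 * d)) / 2 = x + d by ring,
      huG, huG, huG] at h
    have hc : 0 < cos d := cos_pos_of_mem_Ioo ⟨by linarith, hdp⟩
    rw [div_le_iff₀ (by positivity)] at h
    have : G * (u x + u (x + 2 * d)) ≤ G * (2 * cos d * u (x + d)) := by linarith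
    exact le_of_mul_le_mul_left this hGpos
  have hcos := aux_le_cos τ u h0 hle1 hmid
  have hτ2 : τ ≤ π / 2 := by
    by_contra hcon
    push Not at hcon
    have hm : (π / 2 + τ) / 2 ∈ Icc (0 : ℝ) τ := ⟨by linarith [pi_pos], by linarith⟩
    have h1 := hcos _ hm (by linarith [pi_pos])
    have h2 := hnn _ hm
    have h3 : cos ((π / 2 + τ) / 2) < 0 :=
      cos_neg_of_pi_div_two_lt_of_lt (by linarith) (by linarith [pi_pos])
    linarith
  have hcos' : ∀ x ∈ Icc (0 : ℝ) τ, u x ≤ cos x :=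
    fun x hx => hcos x hx (by linarith [hx.2, pi_pos])
  refine ⟨hτ2, ?_, ?_⟩
  · have h := hmid 0 ⟨le_rfl, hτ.le⟩ (τ / 2) (by linarith) (by linarith) (by linarith)
    rw [zero_add, zero_add, h0, show 2 * (τ / 2) = τ by ring] at h
    have h1 := hnn τ ⟨hτ.le, le_rfl⟩
    have hc : 0 < cos (τ / 2) := cos_pos_of_mem_Ioo ⟨by linarith, by linarith⟩
    have : 0 < u (τ / 2) := by
      by_contra hcon
      push Not at hcon
      nlinarith
    rw [hfu _ ⟨by linarith, by linarith⟩]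
    positivity
  · intro x y hx hxy hy
    have hxm : x ∈ Icc (0 : ℝ) τ := ⟨hx, hxy.trans hy⟩
    have hym : y ∈ Icc (0 : ℝ) τ := ⟨hx.trans hxy, hy⟩
    have hcx : 0 ≤ cos x := (hnn x hxm).trans (hcos' x hxm)
    have hfin : u y * cos x ≤ u x * cos y := by
      rcases lt_or_ge y (π / 2) with h | h
      · exact aux_ratio τ u h0 hnn hcos' hmid x y hx hxy hy h
      · have hy' : y = π / 2 := by linarith
        have h1 := hcos' y hym
        have h2 := hnn y hym
        have h3 : cos y = 0 := by rw [hy', cos_pi_div_two]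
        have : u y = 0 := by linarith
        rw [this, h3]; simp
    rw [hfu x hxm, hfu y hym, mul_assoc, mul_assoc, ← mul_pow (u y), ← mul_pow (u x)]
    exact mul_le_mul_of_nonneg_left
      (pow_le_pow_left₀ (mul_nonneg (hnn y hym) hcx) hfin n) (pow_nonneg hGpos.le n)

theorem stmt_1 (n : ℕ) (hn : 1 ≤ n) (τ : ℝ) (hτ : 0 < τ) (hτπ : τ ≤ π)
    (f : ℝ → ℝ) (hf0 : ∀ x ∈ Icc (0 : ℝ) τ, 0 ≤ f x)
    (hfne : ∃ x ∈ Icc (0 : ℝ) τ, f x ≠ 0)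
    (hconc : SinConcaveOn n f (Icc 0 τ))
    (hmax : ∀ x ∈ Icc (0 : ℝ) τ, f x ≤ f 0)
    (k : ℝ) (hk : 0 ≤ k) (ε : ℝ) (hε : 0 < ε) (hεπ : ε ≤ π / 2) :
    (∫ t in (0 : ℝ)..(min ε τ), f t * Real.sin t ^ k) /
        (∫ t in (0 : ℝ)..τ, f t * Real.sin t ^ k)
      ≥ (∫ t in (0 : ℝ)..ε, Real.cos t ^ n * Real.sin t ^ k) /
        (∫ t in (0 : ℝ)..(π / 2), Real.cos t ^ n * Real.sin t ^ k) := by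
  obtain ⟨hτ2, hhalf, hrat⟩ := aux_main n hn τ hτ hτπ f hf0 hfne hconc hmax
  have hcnn : ∀ x, 0 ≤ x → x ≤ π / 2 → 0 ≤ cos x := fun x h1 h2 =>
    cos_nonneg_of_mem_Icc ⟨by linarith [pi_pos], h2⟩
  have hcpos : ∀ x, 0 ≤ x → x < π / 2 → 0 < cos x := fun x h1 h2 =>
    cos_pos_of_mem_Ioo ⟨by linarith [pi_pos], h2⟩
  have hsnn : ∀ x, 0 ≤ x → x ≤ π / 2 → 0 ≤ sin x ^ k := fun x h1 h2 =>
    rpow_nonneg (sin_nonneg_of_nonneg_of_le_pi h1 (by linarith [pi_pos])) _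
  have hanti : AntitoneOn f (Icc 0 τ) := by
    intro x hx y hy hxy
    rcases eq_or_lt_of_le hxy with h | h
    · rw [h]
    have hcx : 0 < cos x ^ n := pow_pos (hcpos x hx.1 (by linarith [hy.2])) n
    have h1 := hrat x y hx.1 hxy hy.2
    have h2 : cos y ^ n ≤ cos x ^ n := pow_le_pow_left₀ (hcnn y hy.1 (by linarith [hy.2]))
      (cos_le_cos_of_nonneg_of_le_pi hx.1 (by linarith [hy.2]) hxy) n
    have h3 := mul_le_mul_of_nonneg_left h2 (hf0 x hx)
    exact le_of_mul_le_mul_right (h1.trans h3) hcx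
  have hscont : Continuous (fun t => sin t ^ k) := continuous_sin.rpow_const (fun _ => Or.inr hk)
  have hCcont : Continuous (fun t => cos t ^ n * sin t ^ k) := by fun_prop
  have hCi : ∀ a b, IntervalIntegrable (fun t => cos t ^ n * sin t ^ k) MeasureTheory.volume a b :=
    fun a b => hCcont.intervalIntegrable a b
  have hFi : ∀ a b, 0 ≤ a → a ≤ b → b ≤ τ →
      IntervalIntegrable (fun t => f t * sin t ^ k) MeasureTheory.volume a b := by
    intro a b ha hab hb
    refine IntervalIntegrable.mul_continuousOn ?_ hscont.continuousOn
    apply AntitoneOn.intervalIntegrable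
    rw [uIcc_of_le hab]
    exact hanti.mono (Icc_subset_Icc ha hb)
  have hCnn : ∀ a b, 0 ≤ a → a ≤ b → b ≤ π / 2 → 0 ≤ ∫ t in a..b, cos t ^ n * sin t ^ k := by
    intro a b ha hab hb
    apply intervalIntegral.integral_nonneg hab
    intro t ht
    exact mul_nonneg (pow_nonneg (hcnn t (ha.trans ht.1) (ht.2.trans hb)) n)
      (hsnn t (ha.trans ht.1) (ht.2.trans hb))
  have hFnn : ∀ a b, 0 ≤ a → a ≤ b → b ≤ τ → 0 ≤ ∫ t in a..b, f t * sin t ^ k := by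
    intro a b ha hab hb
    apply intervalIntegral.integral_nonneg hab
    intro t ht
    exact mul_nonneg (hf0 t ⟨ha.trans ht.1, ht.2.trans hb⟩)
      (hsnn t (ha.trans ht.1) (by linarith [ht.2]))
  have hCpos : ∀ b, 0 < b → b ≤ π / 2 → 0 < ∫ t in (0 : ℝ)..b, cos t ^ n * sin t ^ k := by
    intro b hb hb'
    apply intervalIntegral.intervalIntegral_pos_of_pos_on (hCi 0 b) _ hb
    intro t ht
    exact mul_pos (pow_pos (hcpos t ht.1.le (by linarith [ht.2])) n)
      (rpow_pos_of_pos (sin_pos_of_pos_of_lt_pi ht.1 (by linarith [ht.2, pi_pos])) _)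
  have hlow : ∀ e, 0 ≤ e → e ≤ τ → f e * (∫ t in (0 : ℝ)..e, cos t ^ n * sin t ^ k)
      ≤ cos e ^ n * ∫ t in (0 : ℝ)..e, f t * sin t ^ k := by
    intro e he heτ
    rw [← intervalIntegral.integral_const_mul, ← intervalIntegral.integral_const_mul]
    apply intervalIntegral.integral_mono_on he ((hCi 0 e).const_mul _)
      ((hFi 0 e le_rfl he heτ).const_mul _)
    intro t ht
    have h1 := mul_le_mul_of_nonneg_right (hrat t e ht.1 ht.2 heτ)
      (hsnn t ht.1 (by linarith [ht.2]))
    linarith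
  have hupp : ∀ e, 0 ≤ e → e ≤ τ → cos e ^ n * (∫ t in e..τ, f t * sin t ^ k)
      ≤ f e * ∫ t in e..τ, cos t ^ n * sin t ^ k := by
    intro e he heτ
    rw [← intervalIntegral.integral_const_mul, ← intervalIntegral.integral_const_mul]
    apply intervalIntegral.integral_mono_on heτ ((hFi e τ he heτ le_rfl).const_mul _)
      ((hCi e τ).const_mul _)
    intro t ht
    have h1 := mul_le_mul_of_nonneg_right (hrat e t he ht.1 ht.2)
      (hsnn t (he.trans ht.1) (by linarith [ht.2]))
    linarith
  have hFsplit : ∀ e, 0 ≤ e → e ≤ τ → (∫ t in (0 : ℝ)..τ, f t * sin t ^ k) =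
      (∫ t in (0 : ℝ)..e, f t * sin t ^ k) + ∫ t in e..τ, f t * sin t ^ k := by
    intro e he heτ
    exact (intervalIntegral.integral_add_adjacent_intervals (hFi 0 e le_rfl he heτ)
      (hFi e τ he heτ le_rfl)).symm
  have hCsplit : ∀ a b c : ℝ, (∫ t in a..c, cos t ^ n * sin t ^ k) =
      (∫ t in a..b, cos t ^ n * sin t ^ k) + ∫ t in b..c, cos t ^ n * sin t ^ k := by
    intro a b c
    exact (intervalIntegral.integral_add_adjacent_intervals (hCi a b) (hCi b c)).symm
  have hFpos : 0 < ∫ t in (0 : ℝ)..τ, f t * sin t ^ k := by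
    have h1 := hlow (τ / 2) (by linarith) (by linarith)
    have h2 := mul_pos hhalf (hCpos (τ / 2) (by linarith) (by linarith))
    have h3 : 0 < cos (τ / 2) ^ n := pow_pos (hcpos _ (by linarith) (by linarith)) n
    have h4 := pos_of_mul_pos_right (h2.trans_le h1) h3.le
    have h5 := hFnn (τ / 2) τ (by linarith) (by linarith) le_rfl
    rw [hFsplit (τ / 2) (by linarith) (by linarith)]
    linarith
  have hDpos := hCpos (π / 2) (by linarith) le_rfl
  rw [ge_iff_le, div_le_div_iff₀ hDpos hFpos]
  have hb := hCnn ε (π / 2) hε.le hεπ le_rfl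
  have ha := hCnn 0 ε le_rfl hε.le hεπ
  rcases le_or_gt τ ε with h | h
  · rw [min_eq_right h, mul_comm]
    apply mul_le_mul_of_nonneg_left _ hFpos.le
    rw [hCsplit 0 ε (π / 2)]
    linarith
  · rw [min_eq_left h.le, hFsplit ε hε.le h.le, hCsplit 0 ε (π / 2)]
    have hc : 0 < cos ε ^ n := pow_pos (hcpos _ hε.le (by linarith)) n
    have h1 := hlow ε hε.le h.le
    have h2 := hupp ε hε.le h.le
    have hK := hf0 ε ⟨hε.le, h.le⟩
    have h3 : (∫ t in ε..τ, cos t ^ n * sin t ^ k) ≤ ∫ t in ε..(π / 2), cos t ^ n * sin t ^ k := by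
      have := hCnn τ (π / 2) hτ.le hτ2 le_rfl
      rw [hCsplit ε τ (π / 2)]
      linarith
    have h4 := h2.trans (mul_le_mul_of_nonneg_left h3 hK)
    generalize (∫ t in (0 : ℝ)..ε, f t * sin t ^ k) = A at *
    generalize (∫ t in ε..τ, f t * sin t ^ k) = B at *
    generalize (∫ t in (0 : ℝ)..ε, cos t ^ n * sin t ^ k) = a at *
    generalize (∫ t in ε..(π / 2), cos t ^ n * sin t ^ k) = b at *
    have h5 := mul_le_mul_of_nonneg_left h4 ha
    have h6 := mul_le_mul_of_nonneg_right h1 hb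
    have h7 : cos ε ^ n * (a * B) ≤ cos ε ^ n * (A * b) := by linarith
    have h8 := le_of_mul_le_mul_left h7 hc
    linarith
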